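/- arXiv:1803.11073 — 2 statements merged into one kernel-verified Lean document; each statement's English description precedes it below -/
import Mathlib

section
/- Let X be an infinite separable locally compact metric space without isolated points, let f : X → X be a continuous topologically mixing map, let β denote the diameter of X (β = ∞ if X is unbounded), and let M be an arbitrary infinite set of positive integers. Then there exist countably infinitely many pairwise disjoint Cantor sets S⁽¹⁾, S⁽²⁾, S⁽³⁾, … of totally transitive points of f whose union S = ⋃_{j≥1} S⁽ʲ⁾ is dense in X and is a β-scrambled set of f with respect to M: for all distinct x, y ∈ S, liminf_{n→∞, n∈M} ρ(fⁿ(x), fⁿ(y)) = 0 and limsup_{n→∞, n∈M} ρ(fⁿ(x), fⁿ(y)) ≥ β; moreover, for every n ≥ 1 and all pairwise distinct a₁, …, aₙ ∈ S, the point (a₁, …, aₙ) is a totally transitive point of the n-fold product map f × … × f on Xⁿ. -/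
open Filter ENNReal

/-- `f` is (topologically) mixing. -/
def TopMixing {X : Type*} [TopologicalSpace X] (f : X → X) : Prop :=
  ∀ U V : Set X, IsOpen U → IsOpen V → U.Nonempty → V.Nonempty →
    ∃ N : ℕ, ∀ n : ℕ, N ≤ n → (f^[n] '' U ∩ V).Nonempty

/-- A Cantor set: a nonempty compact, perfect, totally disconnected subset. -/
def IsCantorSet {X : Type*} [TopologicalSpace X] (C : Set X) : Prop :=
  C.Nonempty ∧ IsCompact C ∧ Perfect C ∧ IsTotallyDisconnected C

/-- `x` is a totally transitive point of `g`. -/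
def TotallyTransitivePoint {Y : Type*} [TopologicalSpace Y] (g : Y → Y) (x : Y) : Prop :=
  ∀ k : ℕ, 1 ≤ k → Dense (Set.range fun m : ℕ => g^[k * m] x)

/-- The `n`-fold product map `f × f × ⋯ × f` on `Xⁿ`. -/
def prodMap {X : Type*} (n : ℕ) (f : X → X) : (Fin n → X) → (Fin n → X) :=
  fun x i => f (x i)

/-!
Let `K` be the disjoint union of countably many Cantor spaces. As `K` is zero-dimensional,
continuous maps `K → X` can be glued along clopen sets, so every open set of `C(K, X)` contains a
box of maps constrained by finitely many open subsets of `X` on a clopen partition of `K`. Mixing of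
`f` thus passes to `φ ↦ f ∘ φ` on `C(K, X)`, and by Baire's theorem a generic `φ : K → X` has an
orbit that accumulates at every element of `C(K, X)`, even along prescribed infinite sets of times.
Evaluation at finitely many distinct points of `K` maps `C(K, X)` onto a power of `X`, so distinct
points in the range of such a `φ` are jointly totally transitive and scrambled along `M`.
-/

open Set Topology TopologicalSpace

section ZeroDimensional

variable {K : Type*} [TopologicalSpace K]

theorem finite_range_of_isLocallyConstant_of_eventually_eq {Y : Type*} {g : K → Y}
    (hg : IsLocallyConstant g) {c : Y} (hc : ∀ᶠ x in cocompact K, g x = c) : (range g).Finite := by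
  obtain ⟨Q, hQ, hQc⟩ := mem_cocompact.1 hc
  have hgQ : (g '' Q).Finite := by
    let : TopologicalSpace Y := ⊥
    have : DiscreteTopology Y := ⟨rfl⟩
    exact (hQ.image hg.continuous).finite_of_discrete
  refine (hgQ.insert c).subset (range_subset_iff.2 fun x => ?_)
  by_cases hx : x ∈ Q
  · exact .inr (mem_image_of_mem g hx)
  · exact .inl (hQc hx)

theorem exists_isCompact_isClopen_between [T2Space K] [LocallyCompactSpace K]
    [TotallyDisconnectedSpace K] {Q W : Set K} (hQ : IsCompact Q) (hW : IsOpen W) (hQW : Q ⊆ W) :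
    ∃ C, IsCompact C ∧ IsClopen C ∧ Q ⊆ C ∧ C ⊆ W := by
  obtain ⟨L, hL, hQL, hLW⟩ := exists_compact_between hQ hW hQW
  obtain ⟨C, hC, hQC, hCL⟩ : ∃ C, IsClopen C ∧ Q ⊆ C ∧ C ⊆ interior L := by
    refine hQ.induction_on (p := fun s => ∃ C, IsClopen C ∧ s ⊆ C ∧ C ⊆ interior L)
      ⟨∅, isClopen_empty, Subset.rfl, empty_subset _⟩
      (fun s t hst ⟨C, hC, htC, hCL⟩ => ⟨C, hC, hst.trans htC, hCL⟩)
      (fun s t ⟨C, hC, hsC, hCL⟩ ⟨D, hD, htD, hDL⟩ =>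
        ⟨C ∪ D, hC.union hD, union_subset_union hsC htD, union_subset hCL hDL⟩) fun x hx => ?_
    obtain ⟨C, hC, hxC, hCL⟩ :=
      loc_compact_Haus_tot_disc_of_zero_dim.mem_nhds_iff.1 (isOpen_interior.mem_nhds (hQL hx))
    exact ⟨C, mem_nhdsWithin_of_mem_nhds (hC.isOpen.mem_nhds hxC), C, hC, Subset.rfl, hCL⟩
  have hCL' : C ⊆ L := hCL.trans interior_subset
  exact ⟨C, hL.of_isClosed_subset hC.isClosed hCL', hC, hQC, hCL'.trans hLW⟩

variable {X : Type*} [TopologicalSpace X]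

theorem exists_continuousMap_eqOn_of_isClopen {C : Set K} (hC : IsClopen C) (φ ψ : C(K, X)) :
    ∃ ω : C(K, X), EqOn ω φ C ∧ EqOn ω ψ Cᶜ := by
  classical
  refine ⟨⟨C.piecewise φ ψ, φ.continuous.piecewise (fun x hx => ?_) ψ.continuous⟩,
    C.piecewise_eqOn φ ψ, C.piecewise_eqOn_compl φ ψ⟩
  rw [isClopen_iff_frontier_eq_empty.1 hC] at hx
  exact hx.elim

theorem exists_continuousMap_eqOn_of_finite [T2Space K] [LocallyCompactSpace K]
    [TotallyDisconnectedSpace K] [Nonempty X] {s : Set K} (hs : s.Finite) (y : K → X) :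
    ∃ ω : C(K, X), EqOn ω y s := by
  induction s, hs using Set.Finite.induction_on with
  | empty => exact ⟨.const K (Classical.arbitrary X), eqOn_empty _ _⟩
  | @insert a s ha hs ih =>
    obtain ⟨φ, hφ⟩ := ih
    obtain ⟨C, -, hC, haC, hCs⟩ := exists_isCompact_isClopen_between (isCompact_singleton (x := a))
      hs.isClosed.isOpen_compl (singleton_subset_iff.2 ha)
    obtain ⟨ω, hωC, hωC'⟩ := exists_continuousMap_eqOn_of_isClopen hC (.const K (y a)) φ
    refine ⟨ω, fun x hx => ?_⟩
    rcases hx with rfl | hx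
    · exact hωC (singleton_subset_iff.1 haC)
    · exact (hωC' fun hxC => hCs hxC hx).trans (hφ hx)

theorem surjective_continuousMap_comp_of_injective [T2Space K] [LocallyCompactSpace K]
    [TotallyDisconnectedSpace K] [Nonempty X] {ι : Type*} [Finite ι] {a : ι → K}
    (ha : Function.Injective a) : Function.Surjective fun φ : C(K, X) => φ ∘ a := by
  intro y
  obtain ⟨φ, hφ⟩ := exists_continuousMap_eqOn_of_finite (finite_range a)
    (Function.extend a y fun _ => Classical.arbitrary X)
  exact ⟨φ, funext fun i => (hφ (mem_range_self i)).trans (ha.extend_apply _ _ i)⟩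

end ZeroDimensional

section Tubes

variable {K X : Type*} [TopologicalSpace K] [TopologicalSpace X]

/-- A clopen tube: a locally constant family of open sets that is trivial off a compact set.
The maps with `φ x ∈ V x` for all `x`, for varying tubes `V`, form a basis of the compact-open
topology when `K` is locally compact and zero-dimensional. -/
structure IsClopenTube (V : K → Opens X) : Prop where
  isLocallyConstant : IsLocallyConstant V
  eventually_eq_top : ∀ᶠ x in cocompact K, V x = ⊤

theorem IsClopenTube.inf {V W : K → Opens X} (hV : IsClopenTube V) (hW : IsClopenTube W) :
    IsClopenTube fun x => V x ⊓ W x where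
  isLocallyConstant := hV.isLocallyConstant.comp₂ hW.isLocallyConstant (· ⊓ ·)
  eventually_eq_top := by
    filter_upwards [hV.eventually_eq_top, hW.eventually_eq_top] with x hx hx'
    rw [hx, hx', inf_top_eq]

theorem IsClopenTube.finite_range_prodMk {V W : K → Opens X} (hV : IsClopenTube V)
    (hW : IsClopenTube W) : (range fun x => (V x, W x)).Finite :=
  finite_range_of_isLocallyConstant_of_eventually_eq
    (hV.isLocallyConstant.prodMk hW.isLocallyConstant) (c := (⊤, ⊤)) <| by
      filter_upwards [hV.eventually_eq_top, hW.eventually_eq_top] with x hx hx'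
      rw [hx, hx']

theorem isClopenTube_ite {C : Set K} [DecidablePred (· ∈ C)] (hC : IsCompact C)
    (hC' : IsClopen C) (U : Opens X) : IsClopenTube fun x => if x ∈ C then U else ⊤ where
  isLocallyConstant := by
    refine (IsLocallyConstant.iff_exists_open _).2 fun x => ?_
    by_cases hx : x ∈ C
    · exact ⟨C, hC'.isOpen, hx, fun y hy => by simp only [if_pos hx, if_pos hy]⟩
    · exact ⟨Cᶜ, hC'.compl.isOpen, hx, fun y hy => by simp only [if_neg hx, if_neg hy]⟩
  eventually_eq_top := mem_of_superset hC.compl_mem_cocompact fun _ hx => if_neg hx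

theorem exists_isClopenTube_of_mem_isOpen [T2Space K] [LocallyCompactSpace K]
    [TotallyDisconnectedSpace K] {O : Set C(K, X)} (hO : IsOpen O) {φ : C(K, X)} (hφ : φ ∈ O) :
    ∃ V : K → Opens X, IsClopenTube V ∧ (∀ x, φ x ∈ V x) ∧
      ∀ ψ : C(K, X), (∀ x, ψ x ∈ V x) → ψ ∈ O := by
  classical
  rw [ContinuousMap.compactOpen_eq] at hO
  induction hO with
  | basic O hO =>
    obtain ⟨Q, hQ, U, hU, rfl⟩ := hO
    obtain ⟨C, hC, hC', hQC, hCU⟩ :=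
      exists_isCompact_isClopen_between hQ (hU.preimage φ.continuous) hφ
    refine ⟨_, isClopenTube_ite hC hC' ⟨U, hU⟩, fun x => ?_, fun ψ hψ x hx => ?_⟩
    · split_ifs with hx
      exacts [hCU hx, mem_univ _]
    · have hψx := hψ x
      rwa [if_pos (hQC hx)] at hψx
  | univ =>
    exact ⟨fun _ => ⊤, ⟨.const ⊤, .of_forall fun _ => rfl⟩, fun _ => trivial, fun _ _ => trivial⟩
  | inter O P _ _ ihO ihP =>
    obtain ⟨V, hV, hφV, hVO⟩ := ihO hφ.1
    obtain ⟨W, hW, hφW, hWP⟩ := ihP hφ.2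
    exact ⟨_, hV.inf hW, fun x => ⟨hφV x, hφW x⟩,
      fun ψ hψ => ⟨hVO ψ fun x => (hψ x).1, hWP ψ fun x => (hψ x).2⟩⟩
  | sUnion 𝒪 _ ih =>
    obtain ⟨O, hO, hφO⟩ := hφ
    obtain ⟨V, hV, hφV, hVO⟩ := ih O hO hφO
    exact ⟨V, hV, hφV, fun ψ hψ => ⟨O, hO, hVO ψ hψ⟩⟩

end Tubes

section Postcomposition

variable {K X : Type*} [TopologicalSpace K] [TopologicalSpace X]

theorem iterate_continuousMap_comp_apply (f : C(X, X)) (n : ℕ) (φ : C(K, X)) (x : K) :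
    (f.comp ·)^[n] φ x = f^[n] (φ x) :=
  Function.Semiconj.iterate_right (f := fun ψ : C(K, X) => ψ x) (fun _ => rfl) n φ

theorem TopMixing.continuousMap_comp [T2Space K] [LocallyCompactSpace K]
    [TotallyDisconnectedSpace K] {f : C(X, X)} (hf : TopMixing f) :
    TopMixing fun φ : C(K, X) => f.comp φ := by
  rintro O P hO hP ⟨φ, hφ⟩ ⟨ψ, hψ⟩
  obtain ⟨V, hV, hφV, hVO⟩ := exists_isClopenTube_of_mem_isOpen hO hφ
  obtain ⟨W, hW, hψW, hWP⟩ := exists_isClopenTube_of_mem_isOpen hP hψ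
  let VW : K → Opens X × Opens X := fun x => (V x, W x)
  have : Finite (range VW) := hV.finite_range_prodMk hW
  have hmeet : ∀ᶠ n in atTop, ∀ p : range VW, ∃ y ∈ p.1.1, f^[n] y ∈ p.1.2 := by
    refine eventually_all.2 ?_
    rintro ⟨_, x, rfl⟩
    obtain ⟨N, hN⟩ := hf (V x) (W x) (V x).isOpen (W x).isOpen ⟨_, hφV x⟩ ⟨_, hψW x⟩
    filter_upwards [eventually_ge_atTop N] with n hn
    obtain ⟨_, ⟨y, hyV, rfl⟩, hyW⟩ := hN n hn
    exact ⟨y, hyV, hyW⟩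
  obtain ⟨N, hN⟩ := eventually_atTop.1 hmeet
  refine ⟨N, fun n hn => ?_⟩
  choose y hyV hyW using hN n hn
  have hVW : IsLocallyConstant (rangeFactorization VW) :=
    .desc _ Subtype.val (hV.isLocallyConstant.prodMk hW.isLocallyConstant) Subtype.val_injective
  let ω : C(K, X) := ⟨_, (hVW.comp y).continuous⟩
  refine ⟨_, mem_image_of_mem _ (hVO ω fun x => hyV (rangeFactorization VW x)), hWP _ fun x => ?_⟩
  rw [iterate_continuousMap_comp_apply]
  exact hyW (rangeFactorization VW x)

end Postcomposition

section DenseOrbits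

variable {Y Z : Type*} [TopologicalSpace Y] [TopologicalSpace Z]

/-- The orbit of `y` under `g`, observed only along the filter `l` of times, accumulates at every
point. With `l` the filter of large multiples of `k` this expresses transitivity of `y` for the
`k`-th iterate, and with `l = atTop ⊓ 𝓟 M` it is the source of scrambling with respect to `M`. -/
def DenseOrbitAlong (l : Filter ℕ) (g : Y → Y) (y : Y) : Prop :=
  ∀ z, MapClusterPt z l fun n => g^[n] y

theorem DenseOrbitAlong.map {l : Filter ℕ} {g : Y → Y} {h : Z → Z} {π : Y → Z} {y : Y}
    (hy : DenseOrbitAlong l g y) (hπ : Continuous π) (hdense : DenseRange π)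
    (hsemi : Function.Semiconj π g h) : DenseOrbitAlong l h (π y) := by
  refine isClosed_property hdense isClosed_setOfPred_clusterPt fun z => ?_
  have hπy : π ∘ (fun n => g^[n] y) = fun n => h^[n] (π y) :=
    funext fun n => hsemi.iterate_right n y
  exact hπy ▸ (hy z).continuousAt_comp hπ.continuousAt

theorem totallyTransitivePoint_of_denseOrbitAlong {g : Y → Y} {y : Y}
    (hy : ∀ k, 1 ≤ k → DenseOrbitAlong (map (k * ·) atTop) g y) : TotallyTransitivePoint g y := by
  intro k hk z
  have hz : MapClusterPt z atTop fun m => g^[k * m] y := hy k hk z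
  refine mem_closure_iff_nhds.2 fun s hs => ?_
  obtain ⟨m, hm⟩ := (hz.frequently hs).exists
  exact ⟨_, hm, mem_range_self m⟩

theorem TopMixing.dense_setOf_exists_iterate_mem {g : Y → Y} (hg : TopMixing g) {l : Filter ℕ}
    [l.NeBot] (hl : l ≤ atTop) {L : Set ℕ} (hL : L ∈ l) {U : Set Y} (hU : IsOpen U)
    (hU' : U.Nonempty) : Dense {y | ∃ n ∈ L, g^[n] y ∈ U} := by
  rw [dense_iff_inter_open]
  intro O hO hO'
  obtain ⟨N, hN⟩ := hg O U hO hU hO' hU'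
  obtain ⟨n, hnL, hn⟩ := Filter.nonempty_of_mem (inter_mem hL (hl (Ici_mem_atTop N)))
  obtain ⟨_, ⟨y, hyO, rfl⟩, hyU⟩ := hN n hn
  exact ⟨y, hyO, n, hnL, hyU⟩

theorem TopMixing.eventually_denseOrbitAlong [SecondCountableTopology Y] {g : Y → Y}
    (hg : TopMixing g) (hcont : Continuous g) {l : Filter ℕ} [l.NeBot] [l.IsCountablyGenerated]
    (hl : l ≤ atTop) : ∀ᶠ y in residual Y, DenseOrbitAlong l g y := by
  obtain ⟨L, hL⟩ := l.exists_antitone_basis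
  have hvisit : ∀ᶠ y in residual Y, ∀ U ∈ countableBasis Y, ∀ j, ∃ n ∈ L j, g^[n] y ∈ U := by
    refine (eventually_countable_ball (countable_countableBasis Y)).2 fun U hU =>
      eventually_countable_forall.2 fun j => ?_
    have hUo : IsOpen U := isOpen_of_mem_countableBasis hU
    refine residual_of_dense_open ?_ (hg.dense_setOf_exists_iterate_mem hl (hL.mem j) hUo
      (nonempty_of_mem_countableBasis hU))
    have hunion : {y | ∃ n ∈ L j, g^[n] y ∈ U} = ⋃ n ∈ L j, g^[n] ⁻¹' U := by
      ext y
      simp only [mem_ofPred_eq, mem_iUnion, mem_preimage, exists_prop]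
    rw [hunion]
    exact isOpen_biUnion fun n _ => hUo.preimage (hcont.iterate n)
  filter_upwards [hvisit] with y hy z
  refine ((isBasis_countableBasis Y).nhds_hasBasis.mapClusterPt_iff_frequently).2 ?_
  exact fun U hU => hL.toHasBasis.frequently_iff.2 fun {j} _ => hy U hU.1 j

end DenseOrbits

section Scrambling

variable {X : Type*} {l : Filter ℕ} {f : X → X} {x y : X}

theorem DenseOrbitAlong.ne_of_prodMap [TopologicalSpace X] [T2Space X] [Nontrivial X]
    (hxy : DenseOrbitAlong l (Prod.map f f) (x, y)) : x ≠ y := by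
  rintro rfl
  obtain ⟨p, q, hpq⟩ := exists_pair_ne X
  obtain ⟨n, hn⟩ :=
    ((hxy (p, q)).frequently (isClosed_diagonal.isOpen_compl.mem_nhds hpq)).exists
  exact hn (by rw [Prod.map_iterate]; rfl)

variable [PseudoEMetricSpace X]

theorem DenseOrbitAlong.mapClusterPt_edist
    (hxy : DenseOrbitAlong l (Prod.map f f) (x, y)) (p q : X) :
    MapClusterPt (edist p q) l fun n => edist (f^[n] x) (f^[n] y) := by
  have h := (hxy (p, q)).continuousAt_comp (continuous_edist (α := X)).continuousAt
  simpa only [Function.comp_def, Prod.map_iterate, Prod.map_apply] using h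

theorem DenseOrbitAlong.liminf_edist_eq_zero
    (hxy : DenseOrbitAlong l (Prod.map f f) (x, y)) :
    liminf (fun n => edist (f^[n] x) (f^[n] y)) l = 0 :=
  nonpos_iff_eq_zero.1 <| (hxy.mapClusterPt_edist x x).liminf_le.trans_eq (edist_self x)

theorem DenseOrbitAlong.ediam_univ_le_limsup_edist
    (hxy : DenseOrbitAlong l (Prod.map f f) (x, y)) :
    Metric.ediam (univ : Set X) ≤ limsup (fun n => edist (f^[n] x) (f^[n] y)) l :=
  Metric.ediam_le fun p _ q _ => (hxy.mapClusterPt_edist p q).le_limsup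

end Scrambling

section Generic

variable {K X : Type*} [TopologicalSpace K] [TopologicalSpace X]

theorem dense_setOf_exists_apply_mem [T2Space K] [LocallyCompactSpace K]
    [TotallyDisconnectedSpace K] [NoncompactSpace K] {U : Set X} (hU : U.Nonempty) :
    Dense {φ : C(K, X) | ∃ x, φ x ∈ U} := by
  rw [dense_iff_inter_open]
  rintro O hO ⟨φ, hφ⟩
  obtain ⟨V, hV, hφV, hVO⟩ := exists_isClopenTube_of_mem_isOpen hO hφ
  obtain ⟨x, hx⟩ := hV.eventually_eq_top.exists
  obtain ⟨u, hu⟩ := hU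
  obtain ⟨ψ, hψu, hψφ⟩ := exists_continuousMap_eqOn_of_isClopen
    (hV.isLocallyConstant.isClopen_fiber ⊤) (.const K u) φ
  refine ⟨ψ, hVO ψ fun z => ?_, x, ?_⟩
  · by_cases hz : V z = ⊤
    · exact hz ▸ mem_univ _
    · exact (hψφ hz).symm ▸ hφV z
  · exact (hψu hx).symm ▸ hu

theorem eventually_residual_denseRange [T2Space K] [LocallyCompactSpace K]
    [TotallyDisconnectedSpace K] [NoncompactSpace K] [SecondCountableTopology X] :
    ∀ᶠ φ : C(K, X) in residual _, DenseRange φ := by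
  have hvisit : ∀ᶠ φ : C(K, X) in residual _, ∀ U ∈ countableBasis X, ∃ x, φ x ∈ U := by
    refine (eventually_countable_ball (countable_countableBasis X)).2 fun U hU =>
      residual_of_dense_open ?_ (dense_setOf_exists_apply_mem (nonempty_of_mem_countableBasis hU))
    have hunion : {φ : C(K, X) | ∃ x, φ x ∈ U} = ⋃ x, (fun φ : C(K, X) => φ x) ⁻¹' U := by
      ext φ
      simp only [mem_ofPred_eq, mem_iUnion, mem_preimage]
    rw [hunion]
    exact isOpen_iUnion fun x =>
      (isOpen_of_mem_countableBasis hU).preimage (continuous_eval_const x)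
  filter_upwards [hvisit] with φ hφ
  refine (isBasis_countableBasis X).dense_iff.2 fun U hU _ => ?_
  obtain ⟨x, hx⟩ := hφ U hU
  exact ⟨_, hx, mem_range_self x⟩

theorem baireSpace_continuousMap [WeaklyLocallyCompactSpace K] [SigmaCompactSpace K]
    [IsCompletelyMetrizableSpace X] : BaireSpace C(K, X) := by
  let := upgradeIsCompletelyMetrizable X
  exact .of_completelyPseudoMetrizable

end Generic

section Evaluation

variable {K X : Type*} [TopologicalSpace K] [TopologicalSpace X] {l : Filter ℕ} {f : C(X, X)}
  {φ : C(K, X)}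

theorem DenseOrbitAlong.apply (hφ : DenseOrbitAlong l (fun ψ : C(K, X) => f.comp ψ) φ) (x : K) :
    DenseOrbitAlong l f (φ x) :=
  hφ.map (π := fun ψ : C(K, X) => ψ x) (continuous_eval_const x)
    (Function.Surjective.denseRange fun y => ⟨.const K y, rfl⟩) fun _ => rfl

variable [T2Space K] [LocallyCompactSpace K] [TotallyDisconnectedSpace K] [Nonempty X]

theorem DenseOrbitAlong.comp_injective
    (hφ : DenseOrbitAlong l (fun ψ : C(K, X) => f.comp ψ) φ) {n : ℕ} {a : Fin n → K}
    (ha : Function.Injective a) : DenseOrbitAlong l (prodMap n f) (φ ∘ a) :=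
  hφ.map (π := fun ψ : C(K, X) => ψ ∘ a) (continuous_pi fun i => continuous_eval_const (a i))
    (surjective_continuousMap_comp_of_injective ha).denseRange fun _ => rfl

theorem DenseOrbitAlong.prodMk_of_ne (hφ : DenseOrbitAlong l (fun ψ : C(K, X) => f.comp ψ) φ)
    {x y : K} (hxy : x ≠ y) : DenseOrbitAlong l (Prod.map f f) (φ x, φ y) :=
  (hφ.comp_injective (a := ![x, y]) (injective_pair_iff_ne.2 hxy)).map
    (π := fun v => (v 0, v 1)) (by fun_prop)
    (Function.Surjective.denseRange fun p => ⟨![p.1, p.2], rfl⟩) fun _ => rfl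

end Evaluation

theorem perfectSpace_pi {ι : Type*} [Infinite ι] {Y : ι → Type*} [∀ i, TopologicalSpace (Y i)]
    [∀ i, Nontrivial (Y i)] : PerfectSpace (∀ i, Y i) := by
  classical
  refine perfectSpace_iff_forall_not_isolated.2 fun x => ?_
  choose y hy using fun i => exists_ne (x i)
  have hlim : Tendsto (fun i => Function.update x i (y i)) cofinite (𝓝[≠] x) := by
    refine tendsto_nhdsWithin_iff.2 ⟨tendsto_pi_nhds.2 fun j => ?_, .of_forall fun i hi => ?_⟩
    · refine tendsto_const_nhds.congr' ?_
      filter_upwards [(finite_singleton j).compl_mem_cofinite] with i hij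
      exact (Function.update_of_ne (Ne.symm hij) _ _).symm
    · exact hy i (Function.update_eq_self_iff.1 hi)
  exact hlim.neBot

theorem isCantorSet_range {K X : Type*} [TopologicalSpace K] [TopologicalSpace X] [CompactSpace K]
    [Nonempty K] [PerfectSpace K] [TotallyDisconnectedSpace K] [T2Space X] {g : K → X}
    (hg : Continuous g) (hinj : Function.Injective g) : IsCantorSet (range g) := by
  refine ⟨range_nonempty g, isCompact_range hg, ⟨(isCompact_range hg).isClosed, ?_⟩,
    (hg.isClosedEmbedding hinj).isEmbedding.isTotallyDisconnected_range.2 inferInstance⟩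
  rintro _ ⟨x, rfl⟩
  rw [← image_univ, ← map_principal]
  exact (PerfectSpace.univ_preperfect x (mem_univ x)).map hg.continuousAt hinj

theorem isOpen_range_of_locallyCompactSpace {X Y : Type*} [TopologicalSpace X]
    [TopologicalSpace Y] [WeaklyLocallyCompactSpace X] [T2Space Y] {e : X → Y} (he : IsEmbedding e)
    (hd : DenseRange e) : IsOpen (range e) := by
  refine isOpen_iff_mem_nhds.2 ?_
  rintro _ ⟨x, rfl⟩
  obtain ⟨C, hC, hxC⟩ := exists_compact_mem_nhds x
  rw [he.isInducing.nhds_eq_comap, mem_comap] at hxC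
  obtain ⟨T, hT, hTC⟩ := hxC
  obtain ⟨O, hOT, hO, hxO⟩ := mem_nhds_iff.1 hT
  refine mem_of_superset (hO.mem_nhds hxO) ?_
  calc
    O ⊆ closure (O ∩ range e) := hd.open_subset_closure_inter hO
    _ ⊆ e '' C := closure_minimal
        (by rintro _ ⟨hy, y, rfl⟩; exact mem_image_of_mem e (hTC (hOT hy)))
        (hC.image he.continuous).isClosed
    _ ⊆ range e := image_subset_range e C

theorem isCompletelyMetrizableSpace_of_isOpen {Y : Type*} [TopologicalSpace Y]
    [IsCompletelyMetrizableSpace Y] {s : Set Y} (hs : IsOpen s) : IsCompletelyMetrizableSpace s :=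
  let _ := upgradeIsCompletelyMetrizable Y
  inferInstanceAs (IsCompletelyMetrizableSpace (Opens.CompleteCopy ⟨s, hs⟩))

theorem isCompletelyMetrizableSpace_of_weaklyLocallyCompactSpace (X : Type*) [MetricSpace X]
    [WeaklyLocallyCompactSpace X] : IsCompletelyMetrizableSpace X := by
  have he : IsEmbedding ((↑) : X → UniformSpace.Completion X) :=
    (UniformSpace.Completion.isUniformEmbedding_coe X).isEmbedding
  have := isCompletelyMetrizableSpace_of_isOpen
    (isOpen_range_of_locallyCompactSpace he UniformSpace.Completion.denseRange_coe)
  exact he.toHomeomorph.isClosedEmbedding.IsCompletelyMetrizableSpace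

theorem TopMixing.exists_denseRange_denseOrbitAlong (K : Type*) {X : Type*} [TopologicalSpace K]
    [TopologicalSpace X] [T2Space K] [LocallyCompactSpace K] [TotallyDisconnectedSpace K]
    [SecondCountableTopology K] [NoncompactSpace K] [SecondCountableTopology X]
    [IsCompletelyMetrizableSpace X] [Nonempty X] {f : C(X, X)} (hf : TopMixing f) {l : Filter ℕ}
    [l.NeBot] [l.IsCountablyGenerated] (hl : l ≤ atTop) :
    ∃ φ : C(K, X), DenseRange φ ∧ DenseOrbitAlong l (fun ψ : C(K, X) => f.comp ψ) φ ∧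
      ∀ k, 1 ≤ k → DenseOrbitAlong (map (k * ·) atTop) (fun ψ : C(K, X) => f.comp ψ) φ := by
  have hmix : TopMixing fun ψ : C(K, X) => f.comp ψ := hf.continuousMap_comp
  have hcont : Continuous fun ψ : C(K, X) => f.comp ψ := f.continuous_postcomp
  have hk : ∀ᶠ φ : C(K, X) in residual _, ∀ k, 1 ≤ k →
      DenseOrbitAlong (map (k * ·) atTop) (fun ψ : C(K, X) => f.comp ψ) φ := by
    refine eventually_countable_forall.2 fun k => eventually_imp_distrib_left.2 fun hk => ?_
    exact hmix.eventually_denseOrbitAlong hcont (tendsto_id.const_mul_atTop' hk)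
  have := baireSpace_continuousMap (K := K) (X := X)
  have : Nonempty C(K, X) := ⟨.const K (Classical.arbitrary X)⟩
  exact (dense_of_mem_residual (eventually_residual_denseRange.and
    ((hmix.eventually_denseOrbitAlong hcont hl).and hk))).nonempty

theorem mixing_scrambled_wrt_M_general {X : Type*} [MetricSpace X] [Nontrivial X]
    [SeparableSpace X] [IsCompletelyMetrizableSpace X] (f : X → X) (hf : Continuous f)
    (hmix : TopMixing f) (M : Set ℕ) (hM : M.Infinite) :
    ∃ S : ℕ → Set X,
      (∀ i j, i ≠ j → Disjoint (S i) (S j)) ∧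
      (∀ j, IsCantorSet (S j)) ∧
      (∀ j, ∀ a ∈ S j, TotallyTransitivePoint f a) ∧
      Dense (⋃ j, S j) ∧
      (∀ x ∈ ⋃ j, S j, ∀ y ∈ ⋃ j, S j, x ≠ y →
        liminf (fun n : ℕ => edist (f^[n] x) (f^[n] y)) (atTop ⊓ 𝓟 M) = 0 ∧
        Metric.ediam (univ : Set X) ≤
          limsup (fun n : ℕ => edist (f^[n] x) (f^[n] y)) (atTop ⊓ 𝓟 M)) ∧
      (∀ n : ℕ, 1 ≤ n → ∀ a : Fin n → X, (∀ i, a i ∈ ⋃ j, S j) →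
        Function.Injective a → TotallyTransitivePoint (prodMap n f) a) := by
  have : SecondCountableTopology X := UniformSpace.secondCountable_of_separable X
  have : (atTop ⊓ 𝓟 M).NeBot :=
    frequently_mem_iff_neBot.1 (Nat.frequently_atTop_iff_infinite.2 hM)
  obtain ⟨φ, hdense, hφM, hφ⟩ := TopMixing.exists_denseRange_denseOrbitAlong (ℕ × (ℕ → Bool))
    (f := ⟨f, hf⟩) hmix (l := atTop ⊓ 𝓟 M) inf_le_left
  have hpair : ∀ {x y}, x ≠ y → DenseOrbitAlong (atTop ⊓ 𝓟 M) (Prod.map f f) (φ x, φ y) :=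
    fun hxy => hφM.prodMk_of_ne hxy
  have hinj : Function.Injective φ := fun x y h => by_contra fun hxy => (hpair hxy).ne_of_prodMap h
  have hS : ⋃ j, range (fun z => φ (j, z)) = range φ := by
    ext x
    simp only [mem_iUnion, mem_range, Prod.exists]
  have : PerfectSpace (ℕ → Bool) := perfectSpace_pi
  refine ⟨fun j => range fun z => φ (j, z), fun i j hij => ?_, fun j => ?_, ?_, ?_, ?_, ?_⟩
  · exact disjoint_range_iff.2 fun z w h => hij (congrArg Prod.fst (hinj h))
  · exact isCantorSet_range (by fun_prop) (hinj.comp (Prod.mk_right_injective j))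
  · rintro j _ ⟨z, rfl⟩
    exact totallyTransitivePoint_of_denseOrbitAlong fun k hk => (hφ k hk).apply (j, z)
  · exact hS ▸ hdense
  · rw [hS]
    rintro _ ⟨x, rfl⟩ _ ⟨y, rfl⟩ hxy
    have hxy' := hpair (ne_of_apply_ne φ hxy)
    exact ⟨hxy'.liminf_edist_eq_zero, hxy'.ediam_univ_le_limsup_edist⟩
  · intro n _ a ha hainj
    choose b hb using fun i => hS ▸ ha i
    obtain rfl : φ ∘ b = a := funext hb
    exact totallyTransitivePoint_of_denseOrbitAlong fun k hk =>
      (hφ k hk).comp_injective hainj.of_comp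

theorem mixing_scrambled_wrt_M {X : Type*} [MetricSpace X] [Infinite X]
    [TopologicalSpace.SeparableSpace X] [LocallyCompactSpace X]
    (hiso : ∀ x : X, ¬ IsOpen ({x} : Set X))
    (f : X → X) (hf : Continuous f) (hmix : TopMixing f)
    (β : ℝ≥0∞) (hβ : β = EMetric.diam (Set.univ : Set X))
    (M : Set ℕ) (hM : M.Infinite) (hM1 : ∀ m ∈ M, 1 ≤ m) :
    ∃ S : ℕ → Set X,
      (∀ i j, i ≠ j → Disjoint (S i) (S j)) ∧
      (∀ j, IsCantorSet (S j)) ∧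
      (∀ j, ∀ a ∈ S j, TotallyTransitivePoint f a) ∧
      Dense (⋃ j, S j) ∧
      (∀ x ∈ ⋃ j, S j, ∀ y ∈ ⋃ j, S j, x ≠ y →
        Filter.liminf (fun n : ℕ => edist (f^[n] x) (f^[n] y)) (atTop ⊓ 𝓟 M) = 0 ∧
        β ≤ Filter.limsup (fun n : ℕ => edist (f^[n] x) (f^[n] y)) (atTop ⊓ 𝓟 M)) ∧
      (∀ n : ℕ, 1 ≤ n → ∀ a : Fin n → X, (∀ i, a i ∈ ⋃ j, S j) →
        Function.Injective a → TotallyTransitivePoint (prodMap n f) a) := by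
  have := isCompletelyMetrizableSpace_of_weaklyLocallyCompactSpace X
  exact hβ ▸ mixing_scrambled_wrt_M_general f hf hmix M hM
end

section
/- Let X be an infinite compact metric space and let f : X → X be a continuous weakly mixing map. Then f is chaotic in the following sense: there exists η > 0 such that for every point x ∈ X and every nonempty open set V ⊆ X (not necessarily a neighborhood of x) there exists a point y ∈ V with liminf_{n→∞} ρ(fⁿ(x), fⁿ(y)) = 0 and limsup_{n→∞} ρ(fⁿ(x), fⁿ(y)) ≥ η. -/
open Filter

/-- `f` is (topologically) weakly mixing. -/
def WeaklyMixing {X : Type*} [TopologicalSpace X] (f : X → X) : Prop :=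
  ∀ U₁ U₂ V₁ V₂ : Set X, IsOpen U₁ → IsOpen U₂ → IsOpen V₁ → IsOpen V₂ →
    U₁.Nonempty → U₂.Nonempty → V₁.Nonempty → V₂.Nonempty →
    ∃ n : ℕ, 1 ≤ n ∧ (f^[n] '' U₁ ∩ V₁).Nonempty ∧ (f^[n] '' U₂ ∩ V₂).Nonempty

/-!
By Furstenberg's intersection lemma, the sets of hitting times `N(U, V) = {n | fⁿ(U) ∩ V ≠ ∅}` of a
weakly mixing map form a filter base, so a single arbitrarily large `n` serves finitely many pairs
of open sets at once. Let `z` be a totally bounded sequence of points, such as `z n = fⁿ(x)`, and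
`W` a nonempty open set. For infinitely many `n` the set `fⁿ(W)` meets every ball of a finite cover
of the range of `z`, and so comes close to `z n`; for infinitely many `n` it meets small balls
around two fixed points `a` and `b`, and so contains a point far from `z n`. Hence for generic `y`
the distance from `z n` to `fⁿ(y)` is infinitely often small and infinitely often large, and Baire's
theorem yields such a `y` in any nonempty open set.
-/

open Set

theorem eventually_residual_frequently_mem {X ι : Type*} [TopologicalSpace X] {l : Filter ι}
    [l.IsCountablyGenerated] {s : ι → Set X} (hs : ∀ i, IsOpen (s i))
    (hmeet : ∀ W : Set X, IsOpen W → W.Nonempty → ∃ᶠ i in l, (W ∩ s i).Nonempty) :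
    ∀ᶠ y in residual X, ∃ᶠ i in l, y ∈ s i := by
  obtain ⟨B, hB⟩ := l.exists_antitone_basis
  have hopen (k : ℕ) : IsOpen (⋃ i ∈ B k, s i) := isOpen_biUnion fun i _ => hs i
  have hdense (k : ℕ) : Dense (⋃ i ∈ B k, s i) := by
    refine dense_iff_inter_open.2 fun W hW hWne => ?_
    obtain ⟨i, hi, y, hyW, hy⟩ := hB.toHasBasis.frequently_iff.1 (hmeet W hW hWne) (i := k) trivial
    exact ⟨y, hyW, mem_biUnion hi hy⟩
  filter_upwards [eventually_countable_forall.2 fun k =>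
    residual_of_dense_open (hopen k) (hdense k)] with y hy
  refine hB.toHasBasis.frequently_iff.2 fun {k} _ => ?_
  obtain ⟨i, hi, hyi⟩ := mem_iUnion₂.1 (hy k)
  exact ⟨i, hi, hyi⟩

section HittingTimes

variable {X : Type*} {f : X → X}

/-- The set `N(U, V)` of hitting times of `V` from `U`: those `n` for which `fⁿ(U)` meets `V`, in
the equivalent form that `U` meets the preimage of `V` under `fⁿ`. -/
def hittingTimes (f : X → X) (U V : Set X) : Set ℕ :=
  {n | (U ∩ f^[n] ⁻¹' V).Nonempty}

theorem add_mem_hittingTimes_iff {U V : Set X} {m n : ℕ} :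
    m + n ∈ hittingTimes f U V ↔ n ∈ hittingTimes f U (f^[m] ⁻¹' V) := by
  simp only [hittingTimes, mem_ofPred_eq, Function.iterate_add, preimage_comp]

variable [TopologicalSpace X]

namespace WeaklyMixing

theorem exists_mem_hittingTimes (hwm : WeaklyMixing f) {U₁ V₁ U₂ V₂ : Set X}
    (hU₁ : IsOpen U₁) (hV₁ : IsOpen V₁) (hU₂ : IsOpen U₂) (hV₂ : IsOpen V₂)
    (hU₁ne : U₁.Nonempty) (hV₁ne : V₁.Nonempty) (hU₂ne : U₂.Nonempty) (hV₂ne : V₂.Nonempty) :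
    ∃ n, 1 ≤ n ∧ n ∈ hittingTimes f U₁ V₁ ∧ n ∈ hittingTimes f U₂ V₂ := by
  simpa only [hittingTimes, mem_ofPred_eq, image_inter_nonempty_iff] using
    hwm U₁ U₂ V₁ V₂ hU₁ hU₂ hV₁ hV₂ hU₁ne hU₂ne hV₁ne hV₂ne

theorem denseRange (hwm : WeaklyMixing f) : DenseRange f := by
  refine dense_iff_inter_open.2 fun V hV hVne => ?_
  obtain ⟨n, hn, ⟨x, -, hx⟩, -⟩ := hwm.exists_mem_hittingTimes hV hV hV hV hVne hVne hVne hVne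
  obtain ⟨m, rfl⟩ := Nat.exists_eq_add_of_le' hn
  rw [mem_preimage, Function.iterate_succ_apply'] at hx
  exact ⟨_, hx, mem_range_self _⟩

theorem denseRange_iterate (hwm : WeaklyMixing f) (hf : Continuous f) (n : ℕ) :
    DenseRange f^[n] := by
  induction n with
  | zero => exact denseRange_id
  | succ n ih => exact ih.comp hwm.denseRange (hf.iterate n)

theorem frequently_mem_hittingTimes (hwm : WeaklyMixing f) (hf : Continuous f) {U V : Set X}
    (hU : IsOpen U) (hV : IsOpen V) (hUne : U.Nonempty) (hVne : V.Nonempty) :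
    ∃ᶠ n in atTop, n ∈ hittingTimes f U V := by
  refine frequently_atTop.2 fun N => ?_
  have hopen : IsOpen (f^[N] ⁻¹' V) := hV.preimage (hf.iterate N)
  have hne : (f^[N] ⁻¹' V).Nonempty := (hwm.denseRange_iterate hf N).exists_mem_open hV hVne
  obtain ⟨n, -, hn, -⟩ := hwm.exists_mem_hittingTimes hU hopen hU hopen hUne hne hUne hne
  exact ⟨N + n, N.le_add_right n, add_mem_hittingTimes_iff.2 hn⟩

/-- Furstenberg's intersection lemma. -/
theorem exists_hittingTimes_subset_inter (hwm : WeaklyMixing f) (hf : Continuous f)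
    {U₁ V₁ U₂ V₂ : Set X} (hU₁ : IsOpen U₁) (hV₁ : IsOpen V₁) (hU₂ : IsOpen U₂) (hV₂ : IsOpen V₂)
    (hU₁ne : U₁.Nonempty) (hV₁ne : V₁.Nonempty) (hU₂ne : U₂.Nonempty) (hV₂ne : V₂.Nonempty) :
    ∃ U V : Set X, IsOpen U ∧ IsOpen V ∧ U.Nonempty ∧ V.Nonempty ∧
      hittingTimes f U V ⊆ hittingTimes f U₁ V₁ ∩ hittingTimes f U₂ V₂ := by
  obtain ⟨m, -, hmU, hmV⟩ :=
    hwm.exists_mem_hittingTimes hU₁ hU₂ hV₁ hV₂ hU₁ne hU₂ne hV₁ne hV₂ne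
  refine ⟨U₁ ∩ f^[m] ⁻¹' U₂, V₁ ∩ f^[m] ⁻¹' V₂, hU₁.inter (hU₂.preimage (hf.iterate m)),
    hV₁.inter (hV₂.preimage (hf.iterate m)), hmU, hmV, ?_⟩
  rintro n ⟨x, ⟨hxU₁, hxU₂⟩, hxV₁, hxV₂⟩
  refine ⟨⟨x, hxU₁, hxV₁⟩, f^[m] x, hxU₂, ?_⟩
  rwa [mem_preimage, (Function.Commute.iterate_iterate_self f n m).eq]

variable {ι : Type*} {U V : ι → Set X} {I : Set ι}

theorem exists_hittingTimes_subset_biInter [Nonempty X] (hwm : WeaklyMixing f) (hf : Continuous f)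
    (hU : ∀ i, IsOpen (U i)) (hV : ∀ i, IsOpen (V i)) (hUne : ∀ i, (U i).Nonempty)
    (hVne : ∀ i, (V i).Nonempty) (hI : I.Finite) :
    ∃ U' V' : Set X, IsOpen U' ∧ IsOpen V' ∧ U'.Nonempty ∧ V'.Nonempty ∧
      hittingTimes f U' V' ⊆ ⋂ i ∈ I, hittingTimes f (U i) (V i) := by
  induction I, hI using Set.Finite.induction_on with
  | empty => exact ⟨univ, univ, isOpen_univ, isOpen_univ, univ_nonempty, univ_nonempty, by simp⟩
  | @insert i I _ _ ih =>
    obtain ⟨U', V', hU', hV', hUne', hVne', hsub'⟩ := ih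
    obtain ⟨U'', V'', hU'', hV'', hUne'', hVne'', hsub''⟩ :=
      hwm.exists_hittingTimes_subset_inter hf (hU i) (hV i) hU' hV' (hUne i) (hVne i) hUne' hVne'
    refine ⟨U'', V'', hU'', hV'', hUne'', hVne'', ?_⟩
    rw [biInter_insert]
    exact hsub''.trans (inter_subset_inter_right _ hsub')

theorem frequently_forall_mem_hittingTimes [Nonempty X] (hwm : WeaklyMixing f) (hf : Continuous f)
    (hU : ∀ i, IsOpen (U i)) (hV : ∀ i, IsOpen (V i)) (hUne : ∀ i, (U i).Nonempty)
    (hVne : ∀ i, (V i).Nonempty) (hI : I.Finite) :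
    ∃ᶠ n in atTop, ∀ i ∈ I, n ∈ hittingTimes f (U i) (V i) := by
  obtain ⟨U', V', hU', hV', hUne', hVne', hsub⟩ :=
    hwm.exists_hittingTimes_subset_biInter hf hU hV hUne hVne hI
  exact (hwm.frequently_mem_hittingTimes hf hU' hV' hUne' hVne').mono fun n hn =>
    mem_iInter₂.1 (hsub hn)

end WeaklyMixing

end HittingTimes

theorem exists_dist_pos (X : Type*) [PseudoMetricSpace X] [NontrivialTopology X] :
    ∃ a b : X, 0 < dist a b := by
  obtain ⟨a, b, hab⟩ := NontrivialTopology.exists_not_inseparable ‹NontrivialTopology X›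
  exact ⟨a, b, dist_nonneg.lt_of_ne' (mt Metric.inseparable_iff.2 hab)⟩

namespace WeaklyMixing

variable {X : Type*} [PseudoMetricSpace X] {f : X → X} {W : Set X} {z : ℕ → X}

theorem frequently_forall_exists_dist_lt (hwm : WeaklyMixing f) (hf : Continuous f)
    (hW : IsOpen W) (hWne : W.Nonempty) {C : Set X} (hC : C.Finite) {δ : ℝ} (hδ : 0 < δ) :
    ∃ᶠ n in atTop, ∀ c ∈ C, ∃ y ∈ W, dist (f^[n] y) c < δ := by
  have : Nonempty X := hWne.to_type
  exact hwm.frequently_forall_mem_hittingTimes hf (U := fun _ => W)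
    (V := fun c => Metric.ball c δ) (fun _ => hW) (fun _ => Metric.isOpen_ball) (fun _ => hWne)
    (fun _ => Metric.nonempty_ball.2 hδ) hC

theorem frequently_exists_dist_lt (hwm : WeaklyMixing f) (hf : Continuous f)
    (hz : TotallyBounded (range z)) (hW : IsOpen W) (hWne : W.Nonempty) {ε : ℝ} (hε : 0 < ε) :
    ∃ᶠ n in atTop, ∃ y ∈ W, dist (z n) (f^[n] y) < ε := by
  obtain ⟨C, hC, hcover⟩ := Metric.totallyBounded_iff.1 hz (ε / 2) (half_pos hε)
  refine (hwm.frequently_forall_exists_dist_lt hf hW hWne hC (half_pos hε)).mono fun n hn => ?_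
  obtain ⟨c, hcC, hzc⟩ := mem_iUnion₂.1 (hcover (mem_range_self n))
  obtain ⟨y, hyW, hyc⟩ := hn c hcC
  refine ⟨y, hyW, ?_⟩
  calc dist (z n) (f^[n] y) ≤ dist (z n) c + dist (f^[n] y) c := dist_triangle_right _ _ _
    _ < ε / 2 + ε / 2 := add_lt_add (Metric.mem_ball.1 hzc) hyc
    _ = ε := add_halves ε

theorem frequently_exists_lt_dist (hwm : WeaklyMixing f) (hf : Continuous f) (z : ℕ → X)
    (hW : IsOpen W) (hWne : W.Nonempty) {a b : X} {η : ℝ} (hη : 2 * η < dist a b) :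
    ∃ᶠ n in atTop, ∃ y ∈ W, η < dist (z n) (f^[n] y) := by
  have hδ : 0 < dist a b / 2 - η := by linarith
  refine (hwm.frequently_forall_exists_dist_lt hf hW hWne (toFinite {a, b}) hδ).mono fun n hn => ?_
  obtain ⟨p, hpW, hpa⟩ := hn a (mem_insert a {b})
  obtain ⟨q, hqW, hqb⟩ := hn b (mem_insert_of_mem a rfl)
  by_contra! hnear
  refine lt_irrefl (dist a b) ?_
  calc
    dist a b ≤ dist a (f^[n] p) + dist (f^[n] p) (f^[n] q) + dist (f^[n] q) b :=
      dist_triangle4 _ _ _ _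
    _ ≤ dist (f^[n] p) a + (dist (z n) (f^[n] p) + dist (z n) (f^[n] q)) + dist (f^[n] q) b := by
      rw [dist_comm a]
      gcongr
      exact dist_triangle_left _ _ _
    _ < dist a b := by linarith [hnear p hpW, hnear q hqW]

theorem eventually_residual_frequently_dist_lt (hwm : WeaklyMixing f) (hf : Continuous f)
    (hz : TotallyBounded (range z)) :
    ∀ᶠ y in residual X, ∀ ε > 0, ∃ᶠ n in atTop, dist (z n) (f^[n] y) < ε := by
  have hfixed (k : ℕ) : ∀ᶠ y in residual X,
      ∃ᶠ n in atTop, dist (z n) (f^[n] y) < 1 / ((k : ℝ) + 1) :=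
    eventually_residual_frequently_mem
      (fun n => isOpen_lt (continuous_const.dist (hf.iterate n)) continuous_const)
      fun _ hW hWne => hwm.frequently_exists_dist_lt hf hz hW hWne Nat.one_div_pos_of_nat
  filter_upwards [eventually_countable_forall.2 hfixed] with y hy ε hε
  obtain ⟨k, hk⟩ := exists_nat_one_div_lt hε
  exact (hy k).mono fun n hn => hn.trans hk

theorem eventually_residual_frequently_lt_dist (hwm : WeaklyMixing f) (hf : Continuous f)
    (z : ℕ → X) {a b : X} {η : ℝ} (hη : 2 * η < dist a b) :
    ∀ᶠ y in residual X, ∃ᶠ n in atTop, η < dist (z n) (f^[n] y) :=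
  eventually_residual_frequently_mem
    (fun n => isOpen_lt continuous_const (continuous_const.dist (hf.iterate n)))
    fun _ hW hWne => hwm.frequently_exists_lt_dist hf z hW hWne hη

end WeaklyMixing

theorem weaklyMixing_is_chaotic_general {X : Type*} [PseudoMetricSpace X] [NontrivialTopology X]
    [BoundedSpace X] [BaireSpace X] (f : X → X) (hf : Continuous f) (hwm : WeaklyMixing f) :
    ∃ η : ℝ, 0 < η ∧ ∀ z : ℕ → X, TotallyBounded (range z) →
      ∀ V : Set X, IsOpen V → V.Nonempty →
        ∃ y ∈ V,
          atTop.liminf (fun n : ℕ => dist (z n) (f^[n] y)) = 0 ∧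
          η ≤ atTop.limsup (fun n : ℕ => dist (z n) (f^[n] y)) := by
  obtain ⟨a, b, hab⟩ := exists_dist_pos X
  refine ⟨dist a b / 4, by positivity, fun z hz V hV hVne => ?_⟩
  have hη : 2 * (dist a b / 4) < dist a b := by linarith
  have hgeneric := (hwm.eventually_residual_frequently_dist_lt hf hz).and
    (hwm.eventually_residual_frequently_lt_dist hf z hη)
  obtain ⟨y, ⟨hnear, hfar⟩, hyV⟩ := (dense_of_mem_residual hgeneric).exists_mem_open hV hVne
  have hbddAbove : atTop.IsBoundedUnder (· ≤ ·) fun n => dist (z n) (f^[n] y) := by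
    obtain ⟨D, hD⟩ := Metric.boundedSpace_iff.1 ‹BoundedSpace X›
    exact isBoundedUnder_of ⟨D, fun n => hD _ _⟩
  have hbddBelow : atTop.IsBoundedUnder (· ≥ ·) fun n => dist (z n) (f^[n] y) :=
    isBoundedUnder_of ⟨0, fun n => dist_nonneg⟩
  have hcobdd := hbddAbove.isCoboundedUnder_ge
  exact ⟨y, hyV, le_antisymm ((liminf_le_iff hcobdd hbddBelow).2 hnear)
    (le_liminf_of_le hcobdd (.of_forall fun n => dist_nonneg)),
    le_limsup_of_frequently_le (hfar.mono fun n => le_of_lt) hbddAbove⟩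

theorem weaklyMixing_is_chaotic {X : Type*} [MetricSpace X] [Infinite X] [CompactSpace X]
    (f : X → X) (hf : Continuous f) (hwm : WeaklyMixing f) :
    ∃ η : ℝ, 0 < η ∧ ∀ x : X, ∀ V : Set X, IsOpen V → V.Nonempty →
      ∃ y ∈ V,
        atTop.liminf (fun n : ℕ => dist (f^[n] x) (f^[n] y)) = 0 ∧
        η ≤ atTop.limsup (fun n : ℕ => dist (f^[n] x) (f^[n] y)) := by
  obtain ⟨η, hη, h⟩ := weaklyMixing_is_chaotic_general f hf hwm
  exact ⟨η, hη, fun x => h _ (isCompact_univ.totallyBounded.subset (subset_univ _))⟩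
end
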